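/- Let (A, *, ≻) be a dipterous algebra over a field K and let M_{pq} be the multibrace operations defined recursively from the dipterous structure: with ω^≻(a₁,…,a_k) := ((a₁≻a₂)≻…)≻a_k, set M_{00}=0, M_{10}=M_{01}=id, M_{p0}=0=M_{0q} for p,q ≥ 2, and for p,q ≥ 1, M_{pq}(x₁,…,x_p; y₁,…,y_q) := ω^≻(x₁,…,x_p) * ω^≻(y₁,…,y_q) − Σ_{k=2}^{p+q} Σ ω^≻( M_{i₁j₁}(x¹;y¹), …, M_{i_kj_k}(x^k;y^k) ), the inner sum over sequences (i₁,…,i_k), (j₁,…,j_k) of nonnegative integers with i₁+…+i_k = p, j₁+…+j_k = q and i_t + j_t ≥ 1, with consecutive blocks x^t, y^t. Then for every n ≥ 3 and all x₁,…,x_n, y ∈ A: M_{n1}(x₁,…,x_n; y) = M_{(n−1)1}( (x₁≻x₂), x₃, …, x_n ; y ) − x₁ ≻ M_{(n−1)1}( x₂, …, x_n ; y ). -/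

import Mathlib

open Finset

/-- The set of pairs of sequences `(i₁,…,i_k)`, `(j₁,…,j_k)` of nonnegative integers with
`i₁+⋯+i_k = p`, `j₁+⋯+j_k = q` and `i_t + j_t ≥ 1` for all `t`, encoded as functions
`Fin k → ℕ × ℕ`. -/
def Comps (k p q : ℕ) : Finset (Fin k → ℕ × ℕ) :=
  (Fintype.piFinset fun _ : Fin k => Finset.range (p + 1) ×ˢ Finset.range (q + 1)).filter
    fun c => (∑ t, (c t).1) = p ∧ (∑ t, (c t).2) = q ∧ ∀ t, 1 ≤ (c t).1 + (c t).2

/-- Offset of the `t`-th consecutive block in the first family of variables. -/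
def off1 {k : ℕ} (c : Fin k → ℕ × ℕ) (t : Fin k) : ℕ :=
  ∑ u ∈ Finset.univ.filter (fun u => u < t), (c u).1

/-- Offset of the `t`-th consecutive block in the second family of variables. -/
def off2 {k : ℕ} (c : Fin k → ℕ × ℕ) (t : Fin k) : ℕ :=
  ∑ u ∈ Finset.univ.filter (fun u => u < t), (c u).2

section Ops
variable {A : Type*} [AddCommGroup A]

/-- `M_{i_t j_t}(x^t; y^t)`: the operation `M` applied to the `t`-th consecutive blocks of
the sequences `x` and `y`, as prescribed by the composition `c`. -/
def blockVal (M : ∀ p q : ℕ, (Fin p → A) → (Fin q → A) → A)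
    {k : ℕ} (c : Fin k → ℕ × ℕ) (x y : ℕ → A) (t : Fin k) : A :=
  M (c t).1 (c t).2 (fun s => x (off1 c t + s.1)) (fun s => y (off2 c t + s.1))

/-- The multibrace relation `(R_{ijk})`. -/
def Rrel (M : ∀ p q : ℕ, (Fin p → A) → (Fin q → A) → A)
    (i j k : ℕ) (x y z : ℕ → A) : Prop :=
  ∑ l ∈ Finset.Icc 1 (i + j), ∑ c ∈ Comps l i j,
      M l k (fun t : Fin l => blockVal M c x y t) (fun s : Fin k => z s.1)
    = ∑ m ∈ Finset.Icc 1 (j + k), ∑ c ∈ Comps m j k,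
        M i m (fun s : Fin i => x s.1) (fun t : Fin m => blockVal M c y z t)

/-- `ω^≻`: `omegaIter s x n = ((x₀ ≻ x₁) ≻ ⋯) ≻ x_n`. -/
def omegaIter (s : A → A → A) (x : ℕ → A) : ℕ → A
  | 0 => x 0
  | n + 1 => s (omegaIter s x n) (x (n + 1))

end Ops

/-!
For `p ≥ 2`, a composition of `(x₁,…,x_p; y)` contributes nothing unless its last block is the
single `x_p` or contains `y`; in the second case all earlier blocks must be single `x`s. Summing
the first kind over the number of blocks gives `(ω^≻(x₁,…,x_{p-1}) * y) ≻ x_p`, by the defining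
recursion for `M_{(p-1)1}`, and the dipterous identity turns it into a closed recursion
`M_{p1}(x; y) = ω^≻(x) * y − ω^≻(x₁,…,x_{p-1}) ≻ (y ≻ x_p)
  − ∑_{k=1}^{p} ω^≻(x₁,…,x_k) ≻ M_{(p-k)1}(x_{k+1},…,x_p; y)`.
Replacing `x₁, x₂` by `x₁ ≻ x₂` changes no `ω^≻` that involves both, so the recursions for the two
sequences differ exactly in the term `k = 1`.
-/

theorem mem_Comps {k p q : ℕ} {c : Fin k → ℕ × ℕ} :
    c ∈ Comps k p q ↔
      ∑ t, (c t).1 = p ∧ ∑ t, (c t).2 = q ∧ ∀ t, 1 ≤ (c t).1 + (c t).2 := by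
  simp only [Comps, mem_filter, Fintype.mem_piFinset, mem_product, mem_range, Nat.lt_succ_iff,
    and_iff_right_iff_imp]
  rintro ⟨rfl, rfl, -⟩ t
  exact ⟨single_le_sum_of_canonicallyOrdered (f := fun u => (c u).1) (mem_univ t),
    single_le_sum_of_canonicallyOrdered (f := fun u => (c u).2) (mem_univ t)⟩

theorem Comps_eq_empty_of_lt {k p q : ℕ} (h : p + q < k) : Comps k p q = ∅ := by
  refine eq_empty_of_forall_notMem fun c hc => ?_
  obtain ⟨rfl, rfl, hpos⟩ := mem_Comps.mp hc
  have hcard := card_nsmul_le_sum univ (fun t => (c t).1 + (c t).2) 1 fun t _ => hpos t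
  rw [sum_add_distrib, card_univ, Fintype.card_fin, smul_eq_mul, mul_one] at hcard
  omega

theorem Comps_one {p q : ℕ} (h : 1 ≤ p + q) : Comps 1 p q = {fun _ => (p, q)} := by
  ext c
  simp only [mem_Comps, univ_unique, sum_singleton, mem_singleton, Fin.default_eq_zero,
    funext_iff, Fin.forall_fin_one, Prod.ext_iff]
  omega

theorem snoc_mem_Comps {k p q : ℕ} {c : Fin k → ℕ × ℕ} {a : ℕ × ℕ} :
    (Fin.snoc c a : Fin (k + 1) → ℕ × ℕ) ∈ Comps (k + 1) (p + a.1) (q + a.2) ↔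
      c ∈ Comps k p q ∧ 1 ≤ a.1 + a.2 := by
  simp only [mem_Comps, Fin.sum_univ_castSucc, Fin.forall_fin_succ', Fin.snoc_castSucc,
    Fin.snoc_last, Nat.add_right_cancel_iff, and_assoc]

theorem sum_Comps_succ {B : Type*} [AddCommMonoid B] (k p q : ℕ)
    (f : (Fin (k + 1) → ℕ × ℕ) → B) :
    ∑ c ∈ Comps (k + 1) p q, f c =
      ∑ b ∈ antidiagonal q, ∑ a ∈ antidiagonal p with 1 ≤ a.2 + b.2,
        ∑ c ∈ Comps k a.1 b.1, f (Fin.snoc c (a.2, b.2)) := by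
  simp only [sum_sigma']
  symm
  refine sum_bij' (fun z _ => Fin.snoc z.2.2 (z.2.1.2, z.1.2))
    (fun c _ => ⟨(∑ t, (Fin.init c t).2, (c (Fin.last k)).2),
      (∑ t, (Fin.init c t).1, (c (Fin.last k)).1), Fin.init c⟩) ?_ ?_ ?_ ?_ ?_
  · rintro ⟨b, a, c⟩ hz
    simp only [mem_sigma, mem_filter, HasAntidiagonal.mem_antidiagonal] at hz
    obtain ⟨rfl, ⟨rfl, hpos⟩, hc⟩ := hz
    exact (snoc_mem_Comps (a := (a.2, b.2))).mpr ⟨hc, hpos⟩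
  · intro c hc
    obtain ⟨rfl, rfl, hpos⟩ := mem_Comps.mp hc
    simp [mem_Comps, Fin.sum_univ_castSucc, Fin.init, hpos]
  · rintro ⟨b, a, c⟩ hz
    simp only [mem_sigma, mem_Comps] at hz
    obtain ⟨-, -, hc₁, hc₂, -⟩ := hz
    simp [hc₁, hc₂]
  · intro c _
    exact Fin.snoc_init_self c
  · intro z _
    rfl

section Offsets
variable {k : ℕ} (c : Fin k → ℕ × ℕ) (a : ℕ × ℕ)

theorem off1_snoc_castSucc (t : Fin k) :
    off1 (Fin.snoc c a : Fin (k + 1) → ℕ × ℕ) t.castSucc = off1 c t := by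
  simp [off1, sum_filter, Fin.sum_univ_castSucc, not_lt.mpr (Fin.le_last _)]

theorem off2_snoc_castSucc (t : Fin k) :
    off2 (Fin.snoc c a : Fin (k + 1) → ℕ × ℕ) t.castSucc = off2 c t := by
  simp [off2, sum_filter, Fin.sum_univ_castSucc, not_lt.mpr (Fin.le_last _)]

theorem off1_snoc_last :
    off1 (Fin.snoc c a : Fin (k + 1) → ℕ × ℕ) (Fin.last k) = ∑ t, (c t).1 := by
  simp [off1, sum_filter, Fin.sum_univ_castSucc]

theorem off2_snoc_last :
    off2 (Fin.snoc c a : Fin (k + 1) → ℕ × ℕ) (Fin.last k) = ∑ t, (c t).2 := by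
  simp [off2, sum_filter, Fin.sum_univ_castSucc]

end Offsets

section Blocks
variable {A : Type*} (s : A → A → A) (M : ∀ p q : ℕ, (Fin p → A) → (Fin q → A) → A)
  (x y : ℕ → A)

theorem omegaIter_congr {x x' : ℕ → A} {n : ℕ} (h : ∀ t ≤ n, x t = x' t) :
    omegaIter s x n = omegaIter s x' n := by
  induction n with
  | zero => exact h 0 le_rfl
  | succ n ih =>
    rw [omegaIter, omegaIter, ih fun t ht => h t (Nat.le_succ_of_le ht), h (n + 1) le_rfl]

/-- The sequence `(x₀ ≻ x₁), x₂, x₃, …`, in which the first two entries of `x` are merged. -/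
def mergeHead (t : ℕ) : A :=
  if t = 0 then s (x 0) (x 1) else x (t + 1)

theorem mergeHead_succ (t : ℕ) : mergeHead s x (t + 1) = x (t + 2) :=
  if_neg t.succ_ne_zero

theorem omegaIter_mergeHead (n : ℕ) :
    omegaIter s (mergeHead s x) n = omegaIter s x (n + 1) := by
  induction n with
  | zero => rfl
  | succ n ih =>
    rw [omegaIter, ih, mergeHead_succ]
    rfl

theorem blockVal_snoc_castSucc {k : ℕ} (c : Fin k → ℕ × ℕ) (a : ℕ × ℕ) (t : Fin k) :
    blockVal M (Fin.snoc c a : Fin (k + 1) → ℕ × ℕ) x y t.castSucc = blockVal M c x y t := by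
  simp only [blockVal, off1_snoc_castSucc, off2_snoc_castSucc]
  rw [Fin.snoc_castSucc]

theorem blockVal_snoc_last {k : ℕ} (c : Fin k → ℕ × ℕ) (a : ℕ × ℕ) :
    blockVal M (Fin.snoc c a : Fin (k + 1) → ℕ × ℕ) x y (Fin.last k) =
      M a.1 a.2 (fun i => x (∑ t, (c t).1 + i)) (fun i => y (∑ t, (c t).2 + i)) := by
  simp only [blockVal, off1_snoc_last, off2_snoc_last]
  rw [Fin.snoc_last]

/-- `ω^≻(M_{i₁j₁}(x¹;y¹), …, M_{i_kj_k}(x^k;y^k))`, the contribution of the composition `c` to the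
expansion of `ω^≻(x) * ω^≻(y)`. The blocks are padded by `0` to an infinite sequence, so the
value is `0` when `k = 0`. -/
def omegaBlocks [Zero A] {k : ℕ} (c : Fin k → ℕ × ℕ) : A :=
  omegaIter s (fun t => if h : t < k then blockVal M c x y ⟨t, h⟩ else 0) (k - 1)

theorem omegaBlocks_snoc [Zero A] {k : ℕ} (c : Fin (k + 1) → ℕ × ℕ) (a : ℕ × ℕ) :
    omegaBlocks s M x y (Fin.snoc c a : Fin (k + 2) → ℕ × ℕ) =
      s (omegaBlocks s M x y c)
        (M a.1 a.2 (fun i => x (∑ t, (c t).1 + i)) (fun i => y (∑ t, (c t).2 + i))) := by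
  rw [← blockVal_snoc_last M x y c a, omegaBlocks, omegaBlocks, Nat.add_sub_cancel,
    Nat.add_succ_sub_one, omegaIter, dif_pos (Nat.lt_succ_self _)]
  congr 1
  refine omegaIter_congr s fun t ht => ?_
  have htk : t < k + 1 := Nat.lt_succ_of_le ht
  rw [dif_pos (Nat.lt_succ_of_lt htk), dif_pos htk, ← blockVal_snoc_castSucc M x y c a]
  rfl

end Blocks

section BlockSum
variable {A : Type*} [AddCommMonoid A]

/-- The part of the expansion of `ω^≻(x₁,…,x_p) * ω^≻(y₁,…,y_q)` with exactly `k` blocks. -/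
def blockSum (s : A → A → A) (M : ∀ p q : ℕ, (Fin p → A) → (Fin q → A) → A)
    (k p q : ℕ) (x y : ℕ → A) : A :=
  ∑ c ∈ Comps k p q, omegaBlocks s M x y c

variable (M : ∀ p q : ℕ, (Fin p → A) → (Fin q → A) → A) (x y : ℕ → A)

theorem blockSum_eq_zero_of_lt (s : A → A → A) {k p q : ℕ} (h : p + q < k) :
    blockSum s M k p q x y = 0 := by
  rw [blockSum, Comps_eq_empty_of_lt h, sum_empty]

theorem blockSum_one (s : A → A → A) {p q : ℕ} (h : 1 ≤ p + q) :
    blockSum s M 1 p q x y = M p q (fun i => x i) (fun i => y i) := by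
  simp [blockSum, Comps_one h, omegaBlocks, omegaIter, blockVal, off1, off2]

variable (succ : A →+ A →+ A)

theorem blockSum_succ_succ (k p q : ℕ) :
    blockSum (succ · ·) M (k + 2) p q x y =
      ∑ b ∈ antidiagonal q, ∑ a ∈ antidiagonal p with 1 ≤ a.2 + b.2,
        succ (blockSum (succ · ·) M (k + 1) a.1 b.1 x y)
          (M a.2 b.2 (fun i => x (a.1 + i)) (fun i => y (b.1 + i))) := by
  rw [blockSum, sum_Comps_succ]
  refine sum_congr rfl fun b _ => sum_congr rfl fun a _ => ?_
  rw [blockSum, map_sum, AddMonoidHom.finsetSum_apply]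
  refine sum_congr rfl fun c hc => ?_
  obtain ⟨hp, hq, -⟩ := mem_Comps.mp hc
  rw [omegaBlocks_snoc, hp, hq]

variable {M}

theorem sum_antidiagonal_multibrace_right_zero (hM10 : ∀ x y, M 1 0 x y = x 0)
    (hMp0 : ∀ p, 2 ≤ p → ∀ x y, M p 0 x y = 0) (f : ℕ → A) (p : ℕ) (y : Fin 0 → A) :
    ∑ a ∈ antidiagonal (p + 1) with 1 ≤ a.2,
      succ (f a.1) (M a.2 0 (fun i => x (a.1 + i)) y) = succ (f p) (x p) := by
  rw [sum_eq_single (p, 1)]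
  · simp [hM10]
  · rintro ⟨i, j⟩ ha hne
    simp only [mem_filter, HasAntidiagonal.mem_antidiagonal] at ha
    have hj : j ≠ 1 := by
      rintro rfl
      exact hne (Prod.ext (by simpa using ha.1) rfl)
    rw [hMp0 j (by omega), map_zero]
  · simp

theorem blockSum_right_zero (hM10 : ∀ x y, M 1 0 x y = x 0)
    (hMp0 : ∀ p, 2 ≤ p → ∀ x y, M p 0 x y = 0) (k p : ℕ) :
    blockSum (succ · ·) M (k + 1) p 0 x y = if p = k + 1 then omegaIter (succ · ·) x k else 0 := by
  obtain _ | p := p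
  · simp [blockSum_eq_zero_of_lt]
  induction k generalizing p with
  | zero =>
    obtain _ | p := p
    · simp [blockSum_one, hM10, omegaIter]
    · simp [blockSum_one, hMp0]
  | succ k ih =>
    have hlast : blockSum (succ · ·) M (k + 2) (p + 1) 0 x y =
        succ (blockSum (succ · ·) M (k + 1) p 0 x y) (x p) := by
      simp only [blockSum_succ_succ, Nat.antidiagonal_zero, sum_singleton, add_zero]
      exact sum_antidiagonal_multibrace_right_zero x succ hM10 hMp0
        (fun m => blockSum (succ · ·) M (k + 1) m 0 x y) p _
    rw [hlast]
    obtain _ | p := p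
    · simp [blockSum_eq_zero_of_lt]
    · rw [ih]
      by_cases h : p = k
      · simp [h, omegaIter]
      · simp [h]

theorem blockSum_succ_succ_right_one (hM10 : ∀ x y, M 1 0 x y = x 0)
    (hMp0 : ∀ p, 2 ≤ p → ∀ x y, M p 0 x y = 0) (k m : ℕ) :
    blockSum (succ · ·) M (k + 2) (k + m + 1) 1 x y =
      succ (blockSum (succ · ·) M (k + 1) (k + m) 1 x y) (x (k + m)) +
        succ (omegaIter (succ · ·) x k) (M m 1 (fun i => x (k + 1 + i)) (fun i => y i)) := by
  rw [blockSum_succ_succ, Nat.sum_antidiagonal_succ, Nat.antidiagonal_zero, sum_singleton,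
    add_comm]
  congr 1
  · exact sum_antidiagonal_multibrace_right_zero x succ hM10 hMp0
      (fun m => blockSum (succ · ·) M (k + 1) m 1 x y) (k + m) _
  · rw [sum_eq_single (k + 1, m)]
    · simp [blockSum_right_zero x y succ hM10 hMp0]
    · rintro ⟨i, j⟩ ha hne
      simp only [mem_filter, HasAntidiagonal.mem_antidiagonal] at ha
      have hi : i ≠ k + 1 := by
        rintro rfl
        exact hne (Prod.ext rfl (by simp only; omega))
      simp [blockSum_right_zero x y succ hM10 hMp0, hi]
    · simp [add_right_comm]

theorem sum_blockSum_succ_succ_right_one (hM10 : ∀ x y, M 1 0 x y = x 0)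
    (hMp0 : ∀ p, 2 ≤ p → ∀ x y, M p 0 x y = 0) (p : ℕ) :
    ∑ k ∈ range (p + 1), blockSum (succ · ·) M (k + 2) (p + 1) 1 x y =
      succ (∑ k ∈ range (p + 1), blockSum (succ · ·) M (k + 1) p 1 x y) (x p) +
        ∑ a ∈ antidiagonal p, succ (omegaIter (succ · ·) x a.1)
          (M a.2 1 (fun i => x (a.1 + 1 + i)) (fun i => y i)) := by
  rw [map_sum, AddMonoidHom.finsetSum_apply, Nat.sum_antidiagonal_eq_sum_range_succ_mk,
    ← sum_add_distrib]
  refine sum_congr rfl fun k hk => ?_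
  obtain ⟨m, rfl⟩ := Nat.exists_eq_add_of_le (mem_range_succ_iff.mp hk)
  rw [Nat.add_sub_cancel_left]
  exact blockSum_succ_succ_right_one x y succ hM10 hMp0 k m

end BlockSum

section Dipterous
variable {A : Type*} [AddCommGroup A]

theorem multibrace_right_one_eq {star : A → A → A} {succ : A →+ A →+ A}
    {M : ∀ p q : ℕ, (Fin p → A) → (Fin q → A) → A}
    (hdipt : ∀ x y z : A, succ (star x y) z = succ x (succ y z))
    (hM10 : ∀ x y, M 1 0 x y = x 0) (hMp0 : ∀ p, 2 ≤ p → ∀ x y, M p 0 x y = 0)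
    (hMrec : ∀ (p : ℕ) (x : ℕ → A) (y : A), M (p + 1) 1 (fun i => x i) (fun _ => y) =
      star (omegaIter (succ · ·) x p) y -
        ∑ k ∈ Icc 2 (p + 2), blockSum (succ · ·) M k (p + 1) 1 x (fun _ => y))
    (p : ℕ) (x : ℕ → A) (y : A) :
    M (p + 2) 1 (fun i => x i) (fun _ => y) =
      star (omegaIter (succ · ·) x (p + 1)) y
        - succ (omegaIter (succ · ·) x p) (succ y (x (p + 1)))
        - ∑ a ∈ antidiagonal (p + 1), succ (omegaIter (succ · ·) x a.1)
            (M a.2 1 (fun i => x (a.1 + 1 + i)) (fun _ => y)) := by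
  have hIcc (n : ℕ) (f : ℕ → A) : ∑ k ∈ Icc 2 (n + 1), f k = ∑ k ∈ range n, f (k + 2) := by
    rw [range_eq_Ico, sum_Ico_add' f 0 n 2]
    rfl
  have hexpand : star (omegaIter (succ · ·) x p) y =
      ∑ k ∈ range (p + 2), blockSum (succ · ·) M (k + 1) (p + 1) 1 x (fun _ => y) := by
    rw [sum_range_succ', ← hIcc (p + 1) (blockSum (succ · ·) M · (p + 1) 1 x fun _ => y), zero_add,
      blockSum_one M _ _ _ (Nat.le_add_left 1 _), hMrec, add_sub_cancel]
  rw [hMrec, hIcc, sum_blockSum_succ_succ_right_one x _ succ hM10 hMp0, ← hexpand, hdipt,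
    sub_add_eq_sub_sub]

end Dipterous

theorem dipterous_Mn1_identity_general {A : Type*} [AddCommGroup A]
    (star : A → A → A) (succ : A →+ A →+ A)
    (hdipt : ∀ x y z : A, succ (star x y) z = succ x (succ y z))
    (M : ∀ p q : ℕ, (Fin p → A) → (Fin q → A) → A)
    (hM10 : ∀ x y, M 1 0 x y = x 0)
    (hMp0 : ∀ p, 2 ≤ p → ∀ x y, M p 0 x y = 0)
    (hMrec : ∀ (p : ℕ) (x : ℕ → A) (y : A), M (p + 1) 1 (fun i => x i) (fun _ => y) =
      star (omegaIter (succ · ·) x p) y -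
        ∑ k ∈ Icc 2 (p + 2), blockSum (succ · ·) M k (p + 1) 1 x (fun _ => y))
    (n : ℕ) (hn : 3 ≤ n) (x : ℕ → A) (y : A) :
    M n 1 (fun i => x i) (fun _ => y) =
      M (n - 1) 1 (fun i => mergeHead (succ · ·) x i) (fun _ => y) -
        succ (x 0) (M (n - 1) 1 (fun i => x (i + 1)) (fun _ => y)) := by
  obtain ⟨p, rfl⟩ := Nat.exists_eq_add_of_le' hn
  have hrec := multibrace_right_one_eq hdipt hM10 hMp0 hMrec
  have hmerge : M (p + 2) 1 (fun i => mergeHead (succ · ·) x i) (fun _ => y) =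
      star (omegaIter (succ · ·) x (p + 2)) y
        - succ (omegaIter (succ · ·) x (p + 1)) (succ y (x (p + 2)))
        - ∑ a ∈ antidiagonal (p + 1), succ (omegaIter (succ · ·) x (a.1 + 1))
            (M a.2 1 (fun i => x (a.1 + i + 2)) (fun _ => y)) := by
    simp only [hrec, omegaIter_mergeHead, add_right_comm _ 1, mergeHead_succ]
  have hsplit : M (p + 3) 1 (fun i => x i) (fun _ => y) =
      star (omegaIter (succ · ·) x (p + 2)) y
        - succ (omegaIter (succ · ·) x (p + 1)) (succ y (x (p + 2)))
        - (succ (x 0) (M (p + 2) 1 (fun i => x (i + 1)) (fun _ => y))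
          + ∑ a ∈ antidiagonal (p + 1), succ (omegaIter (succ · ·) x (a.1 + 1))
              (M a.2 1 (fun i => x (a.1 + i + 2)) (fun _ => y))) := by
    rw [hrec (p + 1), Nat.sum_antidiagonal_succ]
    simp only [omegaIter, zero_add, add_comm 1, add_right_comm _ 1]
  rw [hsplit, sub_add_eq_sub_sub_swap, ← hmerge]
  rfl

/-- For the multibrace operations `M_{pq}` induced on a dipterous algebra,
`M_{n1}(x₁,…,x_n; y) = M_{(n-1)1}((x₁≻x₂), x₃,…,x_n; y) − x₁ ≻ M_{(n-1)1}(x₂,…,x_n; y)`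
for every `n ≥ 3`. -/
theorem dipterous_Mn1_identity (K A : Type*) [Field K] [AddCommGroup A] [Module K A]
    (star succ : A →ₗ[K] A →ₗ[K] A)
    (hstar : ∀ x y z : A, star (star x y) z = star x (star y z))
    (hdipt : ∀ x y z : A, succ (star x y) z = succ x (succ y z))
    (M : ∀ p q : ℕ, (Fin p → A) → (Fin q → A) → A)
    (hM00 : ∀ x y, M 0 0 x y = 0)
    (hM10 : ∀ x y, M 1 0 x y = x 0)
    (hM01 : ∀ x y, M 0 1 x y = y 0)
    (hMp0 : ∀ p, 2 ≤ p → ∀ x y, M p 0 x y = 0)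
    (hM0q : ∀ q, 2 ≤ q → ∀ x y, M 0 q x y = 0)
    (hMrec : ∀ p q : ℕ, 1 ≤ p → 1 ≤ q → ∀ x y : ℕ → A,
      M p q (fun i : Fin p => x i.1) (fun i : Fin q => y i.1)
        = star (omegaIter (fun a b => succ a b) x (p - 1))
            (omegaIter (fun a b => succ a b) y (q - 1))
          - ∑ k ∈ Finset.Icc 2 (p + q), ∑ c ∈ Comps k p q,
              omegaIter (fun a b => succ a b)
                (fun t => if h : t < k then blockVal M c x y ⟨t, h⟩ else 0) (k - 1)) :
    ∀ n : ℕ, 3 ≤ n → ∀ (x : ℕ → A) (y : A),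
      M n 1 (fun i : Fin n => x i.1) (fun _ : Fin 1 => y)
        = M (n - 1) 1
            (fun i : Fin (n - 1) => if i.1 = 0 then succ (x 0) (x 1) else x (i.1 + 1))
            (fun _ : Fin 1 => y)
          - succ (x 0)
              (M (n - 1) 1 (fun i : Fin (n - 1) => x (i.1 + 1)) (fun _ : Fin 1 => y)) :=
  dipterous_Mn1_identity_general (fun a b => star a b)
    (LinearMap.toAddMonoidHom'.comp succ.toAddMonoidHom) hdipt M hM10 hMp0
    fun p x y => hMrec (p + 1) 1 p.succ_pos le_rfl x fun _ => y
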